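/- Let Ψ be the set of potentials on an infinite recurrent rooted network (G,c,o). Then M(r) := max_{ψ∈Ψ} min_{v∈∂B(o,r)} ψ(v) tends to infinity as r → ∞. -/

import Mathlib

open scoped ENNReal
open Filter Topology Classical
noncomputable section

/-- A rooted network: a connected, locally finite simple graph with positive
symmetric edge conductances (extended by `0` to non-edges) and a root `o`. -/
structure RootedNetwork (V : Type*) where
  G : SimpleGraph V
  locallyFinite : ∀ x : V, (G.neighborSet x).Finite
  connected : G.Connected
  c : V → V → ℝ
  c_symm : ∀ x y, c x y = c y x
  c_pos : ∀ x y, G.Adj x y → 0 < c x y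
  c_eq_zero : ∀ x y, ¬ G.Adj x y → c x y = 0
  o : V

namespace RootedNetwork

variable {V : Type*}

/-- The vertex weight `c_x = Σ_{z ∼ x} c_{xz}`. -/
noncomputable def cv (N : RootedNetwork V) (x : V) : ℝ := ∑' y, N.c x y

/-- The transition probability `p(x,y) = c_{xy} / c_x` of the network random walk. -/
noncomputable def p (N : RootedNetwork V) (x y : V) : ℝ≥0∞ :=
  ENNReal.ofReal (N.c x y / N.cv x)

/-- The probability that the network random walk started at `x` begins with the
given finite sequence of steps. -/
noncomputable def pathProb (N : RootedNetwork V) : V → List V → ℝ≥0∞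
  | _, [] => 1
  | x, y :: l => N.p x y * pathProb N y l

/-- The probability, starting from `x`, that the walk ever visits `b`
(`P_x(τ_b < ∞)`), computed by decomposing over the finite path up to the first
visit of `b`. -/
noncomputable def hitProb (N : RootedNetwork V) (x b : V) : ℝ≥0∞ :=
  if x = b then 1
  else ∑' l : {l : List V // l.getLast? = some b ∧ b ∉ l.dropLast}, N.pathProb x l.1

/-- A rooted network is recurrent if the walk started from any vertex almost
surely visits the root `o`. -/
def Recurrent (N : RootedNetwork V) : Prop := ∀ x : V, N.hitProb x N.o = 1

/-- The Green kernel `G_o(x,y) = Σ_{n ≥ 0} P_x(X_n = y, τ_o > n)` of the walk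
killed at the root, computed as a sum over finite paths from `x` to `y`
avoiding `o` (the `n = 0` term is the first summand). -/
noncomputable def GreenKer (N : RootedNetwork V) (x y : V) : ℝ≥0∞ :=
  (if x = y ∧ x ≠ N.o then 1 else 0) +
    ∑' l : {l : List V // l.getLast? = some y ∧ N.o ∉ x :: l}, N.pathProb x l.1

/-- The Green density `g_o(x,y) = G_o(x,y) / c_y`. -/
noncomputable def greenDensity (N : RootedNetwork V) (x y : V) : ℝ≥0∞ :=
  N.GreenKer x y / ENNReal.ofReal (N.cv y)

/-- The network Laplacian `Δ f (v) = Σ_{x ∼ v} c_{vx} (f(x) - f(v))`. -/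
noncomputable def lap (N : RootedNetwork V) (f : V → ℝ) (v : V) : ℝ :=
  ∑' x, N.c v x * (f x - f v)

/-- A potential: a nonnegative function vanishing at `o`, with Laplacian `1`
at `o`, harmonic everywhere else. -/
def IsPotential (N : RootedNetwork V) (h : V → ℝ) : Prop :=
  (∀ v, 0 ≤ h v) ∧ h N.o = 0 ∧ N.lap h N.o = 1 ∧ ∀ v, v ≠ N.o → N.lap h v = 0

end RootedNetwork
namespace RootedNetwork
section aux
variable {V : Type*} (N : RootedNetwork V)

def nb (v : V) : Finset V := (N.locallyFinite v).toFinset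

lemma mem_nb {v x : V} : x ∈ N.nb v ↔ N.G.Adj v x := by
  simp [nb]

lemma c_nonneg (x y : V) : 0 ≤ N.c x y := by
  by_cases h : N.G.Adj x y
  · exact (N.c_pos x y h).le
  · exact (N.c_eq_zero x y h).ge

lemma lap_eq {v : V} {T : Finset V} (hT : N.nb v ⊆ T) (f : V → ℝ) :
    N.lap f v = ∑ x ∈ T, N.c v x * (f x - f v) := by
  unfold lap
  apply tsum_eq_sum
  intro x hx
  rw [N.c_eq_zero, zero_mul]
  intro h
  exact hx (hT (N.mem_nb.2 h))

lemma cv_eq (v : V) : N.cv v = ∑ x ∈ N.nb v, N.c v x := by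
  unfold cv
  apply tsum_eq_sum
  intro x hx
  rw [N.c_eq_zero]
  intro h
  exact hx (N.mem_nb.2 h)

lemma lap_eq' (f : V → ℝ) (v : V) :
    N.lap f v = ∑ x ∈ N.nb v, N.c v x * f x - N.cv v * f v := by
  rw [N.lap_eq (Finset.Subset.refl _), N.cv_eq, Finset.sum_mul, ← Finset.sum_sub_distrib]
  exact Finset.sum_congr rfl fun x _ => by ring

lemma exists_adj [Infinite V] (v : V) : ∃ x, N.G.Adj v x := by
  have := N.connected.preconnected.exists_adj_of_nontrivial v
  exact this

lemma cv_pos [Infinite V] (v : V) : 0 < N.cv v := by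
  rw [N.cv_eq]
  obtain ⟨x, hx⟩ := N.exists_adj v
  exact Finset.sum_pos (fun y hy => N.c_pos _ _ (N.mem_nb.1 hy)) ⟨x, N.mem_nb.2 hx⟩

lemma tsum_list (h : List V → ℝ≥0∞) :
    ∑' l, h l = h [] + ∑' y, ∑' l, h (y :: l) := by
  let e : Unit ⊕ (V × List V) ≃ List V :=
    { toFun := fun o => o.elim (fun _ => []) (fun p => p.1 :: p.2)
      invFun := fun l => match l with
        | [] => Sum.inl ()
        | y :: l => Sum.inr (y, l)
      left_inv := by rintro (_ | ⟨y, l⟩) <;> rfl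
      right_inv := by rintro (_ | ⟨y, l⟩) <;> rfl }
  rw [← e.tsum_eq, Summable.tsum_sum ENNReal.summable ENNReal.summable]
  rw [← ENNReal.tsum_prod (f := fun y l => h (y :: l))]
  congr 1
  rw [tsum_fintype]
  simp [e]

lemma path_bound [Infinite V] (φ : V → ℝ) (h0 : ∀ v, 0 ≤ φ v) (ho : 1 ≤ φ N.o)
    (hs : ∀ v, v ≠ N.o → N.lap φ v ≤ 0) (n : ℕ) : ∀ x, x ≠ N.o →
    ∑' l : List V, (if (l.getLast? = some N.o ∧ N.o ∉ l.dropLast ∧ l.length ≤ n)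
      then N.pathProb x l else 0) ≤ ENNReal.ofReal (φ x) := by
  induction n with
  | zero =>
    intro x hx
    have : ∀ l : List V, (if (l.getLast? = some N.o ∧ N.o ∉ l.dropLast ∧ l.length ≤ 0)
      then N.pathProb x l else 0) = 0 := by
      intro l
      rw [if_neg]
      rintro ⟨h1, h2, h3⟩
      have : l = [] := by simpa using h3
      simp [this] at h1
    simp only [this, tsum_zero]
    exact zero_le
  | succ n ih =>
    intro x hx
    rw [tsum_list]
    have key : ∀ y, ∑' l : List V, (if ((y :: l).getLast? = some N.o ∧ N.o ∉ (y :: l).dropLast ∧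
        (y :: l).length ≤ n + 1) then N.pathProb x (y :: l) else 0) ≤
        N.p x y * ENNReal.ofReal (φ y) := by
      intro y
      by_cases hy : y = N.o
      · subst hy
        rw [tsum_eq_single []]
        · simp only [pathProb]
          split_ifs
          · gcongr
            simpa using ho
          · exact zero_le
        · intro l hl
          rw [if_neg]
          rintro ⟨_, h2, _⟩
          apply h2
          cases l with
          | nil => exact absurd rfl hl
          | cons a l => simp
      · refine le_trans ?_ (mul_le_mul_right (ih y hy) _)
        rw [← ENNReal.tsum_mul_left]
        refine ENNReal.tsum_le_tsum fun l => ?_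
        cases l with
        | nil => simp [hy]
        | cons a l =>
          simp only [pathProb, List.getLast?_cons_cons, List.dropLast_cons_cons, List.length_cons]
          split_ifs with h1 h2
          · exact le_rfl
          · exfalso
            apply h2
            obtain ⟨a1, a2, a3⟩ := h1
            refine ⟨a1, fun h => a2 (List.mem_cons_of_mem _ h), by omega⟩
          · exact zero_le
          · exact zero_le
    simp only [List.getLast?_nil, reduceCtorEq, false_and, if_false, zero_add]
    refine le_trans (ENNReal.tsum_le_tsum key) ?_
    rw [tsum_eq_sum (s := N.nb x)]
    · have hc := N.cv_pos x
      have : ∀ y ∈ N.nb x, N.p x y * ENNReal.ofReal (φ y) =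
          ENNReal.ofReal (N.c x y * φ y / N.cv x) := by
        intro y _
        rw [p, ← ENNReal.ofReal_mul (div_nonneg (N.c_nonneg _ _) hc.le)]
        congr 1; ring
      rw [Finset.sum_congr rfl this, ← ENNReal.ofReal_sum_of_nonneg]
      · apply ENNReal.ofReal_le_ofReal
        rw [← Finset.sum_div, div_le_iff₀ hc]
        have := hs x hx
        rw [N.lap_eq'] at this
        linarith
      · intro y _
        exact div_nonneg (mul_nonneg (N.c_nonneg _ _) (h0 y)) hc.le
    · intro y hy
      rw [p, N.c_eq_zero]
      · simp
      · intro h; exact hy (N.mem_nb.2 h)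

lemma super_ge_one [Infinite V] (hrec : N.Recurrent) (φ : V → ℝ) (h0 : ∀ v, 0 ≤ φ v)
    (ho : 1 ≤ φ N.o) (hs : ∀ v, v ≠ N.o → N.lap φ v ≤ 0) (x : V) : 1 ≤ φ x := by
  by_cases hx : x = N.o
  · rw [hx]; exact ho
  have h := hrec x
  rw [hitProb, if_neg hx] at h
  have h2 : ∑' l : {l : List V // l.getLast? = some N.o ∧ N.o ∉ l.dropLast}, N.pathProb x l.1
      ≤ ENNReal.ofReal (φ x) := by
    rw [ENNReal.tsum_eq_iSup_sum]
    refine iSup_le fun S => ?_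
    refine le_trans ?_ (N.path_bound φ h0 ho hs (S.sup fun l => l.1.length) x hx)
    have e1 : ∑ a ∈ S, N.pathProb x a.1 =
        ∑ l ∈ S.map (Function.Embedding.subtype _), N.pathProb x l := by
      rw [Finset.sum_map]; rfl
    rw [e1]
    refine le_trans (le_of_eq ?_) (ENNReal.sum_le_tsum (S.map (Function.Embedding.subtype _)))
    refine Finset.sum_congr rfl fun l hl => ?_
    rw [if_pos]
    simp only [Finset.mem_map, Function.Embedding.subtype_apply] at hl
    obtain ⟨a, ha, rfl⟩ := hl
    exact ⟨a.2.1, a.2.2, Finset.le_sup (f := fun l : {l : List V // l.getLast? = some N.o ∧ N.o ∉ l.dropLast} => l.1.length) ha⟩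
  rw [h] at h2
  simpa using h2

lemma lap_add (f g : V → ℝ) (v : V) : N.lap (fun x => f x + g x) v = N.lap f v + N.lap g v := by
  simp only [lap_eq', mul_add, Finset.sum_add_distrib]; ring

lemma lap_smul (a : ℝ) (f : V → ℝ) (v : V) : N.lap (fun x => a * f x) v = a * N.lap f v := by
  simp only [lap_eq', mul_sub, Finset.mul_sum]
  congr 1
  · exact Finset.sum_congr rfl fun x _ => by ring
  · ring

lemma lap_const (a : ℝ) (v : V) : N.lap (fun _ => a) v = 0 := by
  simp [lap]

lemma lap_sum {ι : Type*} (F : Finset ι) (a : ι → ℝ) (f : ι → V → ℝ) (v : V) :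
    N.lap (fun x => ∑ i ∈ F, a i * f i x) v = ∑ i ∈ F, a i * N.lap (f i) v := by
  induction F using Finset.induction_on with
  | empty => simpa using N.lap_const 0 v
  | insert i F hi ih =>
    simp only [Finset.sum_insert hi]
    rw [N.lap_add, N.lap_smul, ih]

lemma lap_tendsto {ι : Type*} {l : Filter ι} {f : ι → V → ℝ} {g : V → ℝ}
    (h : ∀ v, Tendsto (fun i => f i v) l (𝓝 (g v))) (v : V) :
    Tendsto (fun i => N.lap (f i) v) l (𝓝 (N.lap g v)) := by
  simp only [lap_eq']
  exact (tendsto_finsetSum _ fun x _ => (h x).const_mul _).sub ((h v).const_mul _)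

/-- minimum principle -/
lemma min_principle [Infinite V] (hrec : N.Recurrent) (k : V → ℝ) (b : ℝ) (hb : ∀ v, -b ≤ k v)
    (ho : 0 ≤ k N.o) (hs : ∀ v, v ≠ N.o → N.lap k v ≤ 0) (x : V) : 0 ≤ k x := by
  have hB : 0 < |b| + 1 := by positivity
  have := N.super_ge_one hrec (fun v => (|b| + 1)⁻¹ * (k v + (|b| + 1))) (fun v => by
    have := hb v
    have := le_abs_self b
    exact mul_nonneg (inv_nonneg.2 hB.le) (by linarith)) (by
      rw [← div_eq_inv_mul, le_div_iff₀ hB]; linarith) (fun v hv => by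
      rw [N.lap_smul, N.lap_add, N.lap_const, add_zero]
      exact mul_nonpos_of_nonneg_of_nonpos (inv_nonneg.2 hB.le) (hs v hv)) x
  rw [← div_eq_inv_mul, le_div_iff₀ hB] at this
  linarith

/-- pointwise bounds -/
lemma exists_bound [Infinite V] (v : V) : ∃ (C : ℝ) (P : Finset V), 0 ≤ C ∧ ∀ f : V → ℝ,
    (∀ v, 0 ≤ f v) → f N.o = 0 →
    N.lap f N.o ≤ 1 → (∀ v ∈ P, v ≠ N.o → N.lap f v ≤ 0) → f v ≤ C := by
  have hw : N.G.Reachable N.o v := N.connected.preconnected _ _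
  rw [SimpleGraph.reachable_iff_reflTransGen] at hw
  induction hw with
  | refl => exact ⟨0, ∅, le_rfl, fun f _ h _ _ => h.le⟩
  | @tail y z hy hyz ih =>
    obtain ⟨C, P, hC, ih⟩ := ih
    have hp := N.c_pos _ _ hyz
    have hcv := N.cv_pos y
    refine ⟨(1 + N.cv y * C) / N.c y z, insert y P, by positivity, fun f h0 h1 h2 h3 => ?_⟩
    rw [le_div_iff₀ hp]
    have hl : N.lap f y ≤ 1 := by
      by_cases h : y = N.o
      · rw [h]; exact h2
      · linarith [h3 y (Finset.mem_insert_self _ _) h]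
    rw [N.lap_eq'] at hl
    have h4 : N.c y z * f z ≤ ∑ x ∈ N.nb y, N.c y x * f x :=
      Finset.single_le_sum (f := fun x => N.c y x * f x)
        (fun x _ => mul_nonneg (N.c_nonneg _ _) (h0 x)) (N.mem_nb.2 hyz)
    have h5 := mul_le_mul_of_nonneg_left
      (ih f h0 h1 h2 (fun v hv => h3 v (Finset.mem_insert_of_mem hv))) hcv.le
    linarith

end aux
end RootedNetwork
namespace RootedNetwork
section aux2
variable {V : Type*} (N : RootedNetwork V)

lemma fin_min {S : Finset V} (hS : N.o ∉ S) (f : V → ℝ) (h0 : ∀ v, v ∉ S → f v = 0)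
    (hl : ∀ v ∈ S, N.lap f v ≤ 0) (v : V) : 0 ≤ f v := by
  by_contra hv
  push Not at hv
  have hvS : v ∈ S := by
    by_contra h
    rw [h0 v h] at hv
    exact lt_irrefl _ hv
  obtain ⟨m, hm, hmin⟩ := Finset.exists_min_image S f ⟨v, hvS⟩
  have hneg : f m < 0 := lt_of_le_of_lt (hmin v hvS) hv
  have hmin' : ∀ x, f m ≤ f x := fun x => by
    by_cases hx : x ∈ S
    · exact hmin x hx
    · rw [h0 x hx]; exact hneg.le
  have : ∀ w, f w = f m := by
    intro w
    have hw : N.G.Reachable m w := N.connected.preconnected _ _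
    rw [SimpleGraph.reachable_iff_reflTransGen] at hw
    induction hw with
    | refl => rfl
    | @tail y z hy hyz ih =>
      have hyS : y ∈ S := by
        by_contra h
        rw [h0 y h] at ih
        linarith
      have h1 := hl y hyS
      rw [N.lap_eq (Finset.Subset.refl _)] at h1
      have h2 : ∀ x ∈ N.nb y, 0 ≤ N.c y x * (f x - f y) := fun x _ =>
        mul_nonneg (N.c_nonneg _ _) (by rw [ih]; linarith [hmin' x])
      have h3 := (Finset.sum_eq_zero_iff_of_nonneg h2).1 (le_antisymm h1 (Finset.sum_nonneg h2))
        z (N.mem_nb.2 hyz)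
      have h4 := N.c_pos _ _ hyz
      rcases mul_eq_zero.1 h3 with h | h
      · exact absurd h h4.ne'
      · linarith
  have := this N.o
  rw [h0 _ hS] at this
  linarith

lemma fin_zero {S : Finset V} (hS : N.o ∉ S) (f : V → ℝ) (h0 : ∀ v, v ∉ S → f v = 0)
    (hl : ∀ v ∈ S, N.lap f v = 0) (v : V) : f v = 0 := by
  apply le_antisymm _ (N.fin_min hS f h0 (fun v hv => (hl v hv).le) v)
  have := N.fin_min hS (fun x => (-1) * f x) (fun v hv => by rw [h0 v hv]; simp)
    (fun v hv => by rw [N.lap_smul, hl v hv]; simp) v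
  linarith

lemma fin_solve {S : Finset V} (hS : N.o ∉ S) (b : V → ℝ) :
    ∃ f : V → ℝ, (∀ v, v ∉ S → f v = 0) ∧ ∀ v ∈ S, N.lap f v = b v := by
  let ext : (S → ℝ) → V → ℝ := fun f v => if h : v ∈ S then f ⟨v, h⟩ else 0
  have ext_add : ∀ f g, ext (f + g) = fun x => ext f x + ext g x := by
    intro f g; funext x; simp only [ext]; split_ifs <;> simp
  have ext_smul : ∀ (a : ℝ) f, ext (a • f) = fun x => a * ext f x := by
    intro a f; funext x; simp only [ext]; split_ifs <;> simp
  let L : (S → ℝ) →ₗ[ℝ] (S → ℝ) :=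
    { toFun := fun f v => N.lap (ext f) v
      map_add' := fun f g => by funext v; rw [ext_add, N.lap_add]; rfl
      map_smul' := fun a f => by funext v; rw [ext_smul, N.lap_smul]; rfl }
  have hinj : Function.Injective L := by
    rw [injective_iff_map_eq_zero]
    intro f hf
    funext v
    have := N.fin_zero hS (ext f) (fun v hv => by simp [ext, hv])
      (fun v hv => congrFun hf ⟨v, hv⟩) v.1
    simpa [ext] using this
  obtain ⟨f, hf⟩ := LinearMap.injective_iff_surjective.1 hinj (fun v => b v.1)
  exact ⟨ext f, fun v hv => by simp [ext, hv], fun v hv => congrFun hf ⟨v, hv⟩⟩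

lemma fin_dbl {S T : Finset V} (hT : S ∪ S.biUnion N.nb ⊆ T) (f h : V → ℝ)
    (hh : ∀ v, v ∉ S → h v = 0) :
    ∑ v ∈ S, h v * N.lap f v = ∑ v ∈ T, ∑ x ∈ T, h v * (N.c v x * (f x - f v)) := by
  rw [← Finset.sum_subset (fun v hv => hT (Finset.mem_union_left _ hv) : S ⊆ T)]
  · refine Finset.sum_congr rfl fun v hv => ?_
    rw [N.lap_eq (T := T), Finset.mul_sum]
    intro x hx
    exact hT (Finset.mem_union_right _ (Finset.mem_biUnion.2 ⟨v, hv, hx⟩))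
  · intro v _ hv
    simp [hh v hv]

lemma fin_symm {S : Finset V} (f h : V → ℝ)
    (hf : ∀ v, v ∉ S → f v = 0) (hh : ∀ v, v ∉ S → h v = 0) :
    ∑ v ∈ S, h v * N.lap f v = ∑ v ∈ S, f v * N.lap h v := by
  rw [N.fin_dbl (Finset.Subset.refl _) f h hh, N.fin_dbl (Finset.Subset.refl _) h f hf]
  set T := S ∪ S.biUnion N.nb
  have e : ∀ f h : V → ℝ, ∑ v ∈ T, ∑ x ∈ T, h v * (N.c v x * (f x - f v)) =
      ∑ v ∈ T, ∑ x ∈ T, N.c v x * (h v * f x) - ∑ v ∈ T, ∑ x ∈ T, N.c v x * (h v * f v) := by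
    intro f h
    simp only [← Finset.sum_sub_distrib]
    exact Finset.sum_congr rfl fun v _ => Finset.sum_congr rfl fun x _ => by ring
  rw [e, e]
  congr 1
  · rw [Finset.sum_comm]
    exact Finset.sum_congr rfl fun v _ => Finset.sum_congr rfl fun x _ => by
      rw [N.c_symm]; ring
  · exact Finset.sum_congr rfl fun v _ => Finset.sum_congr rfl fun x _ => by ring

lemma fin_neg {S : Finset V} (f : V → ℝ) (hf : ∀ v, v ∉ S → f v = 0) :
    ∑ v ∈ S, f v * N.lap f v ≤ 0 := by
  rw [N.fin_dbl (Finset.Subset.refl _) f f hf]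
  set T := S ∪ S.biUnion N.nb
  have e1 : ∑ v ∈ T, ∑ x ∈ T, f v * (N.c v x * (f x - f v)) =
      ∑ v ∈ T, ∑ x ∈ T, f x * (N.c v x * (f v - f x)) := by
    rw [Finset.sum_comm]
    exact Finset.sum_congr rfl fun v _ => Finset.sum_congr rfl fun x _ => by
      rw [N.c_symm]
  have e2 : ∑ v ∈ T, ∑ x ∈ T, f v * (N.c v x * (f x - f v)) +
      ∑ v ∈ T, ∑ x ∈ T, f x * (N.c v x * (f v - f x)) ≤ 0 := by
    simp only [← Finset.sum_add_distrib]
    refine Finset.sum_nonpos fun v _ => Finset.sum_nonpos fun x _ => ?_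
    have := mul_nonneg (N.c_nonneg v x) (sq_nonneg (f x - f v))
    nlinarith
  linarith

lemma fin_flux {S : Finset V} (hS : N.o ∉ S) (f : V → ℝ) (hf : ∀ v, v ∉ S → f v = 0)
    (h0 : ∀ v, 0 ≤ f v) : N.lap f N.o ≤ - ∑ v ∈ S, N.lap f v := by
  let S' := insert N.o S
  let T := S' ∪ S'.biUnion N.nb
  have hS' : S' ⊆ T := Finset.subset_union_left
  have h1 : ∑ v ∈ T, ∑ x ∈ T, N.c v x * (f x - f v) = 0 := by
    have : ∑ v ∈ T, ∑ x ∈ T, N.c v x * (f x - f v) =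
      ∑ v ∈ T, ∑ x ∈ T, N.c v x * (f v - f x) := by
      rw [Finset.sum_comm]
      exact Finset.sum_congr rfl fun v _ => Finset.sum_congr rfl fun x _ => by
        rw [N.c_symm]
    have h2 : ∑ v ∈ T, ∑ x ∈ T, N.c v x * (f x - f v) +
      ∑ v ∈ T, ∑ x ∈ T, N.c v x * (f v - f x) = 0 := by
      simp only [← Finset.sum_add_distrib]
      exact Finset.sum_eq_zero fun v _ => Finset.sum_eq_zero fun x _ => by ring
    linarith
  have h2 : ∑ v ∈ S', ∑ x ∈ T, N.c v x * (f x - f v) ≤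
      ∑ v ∈ T, ∑ x ∈ T, N.c v x * (f x - f v) := by
    refine Finset.sum_le_sum_of_subset_of_nonneg hS' fun v _ hv => ?_
    refine Finset.sum_nonneg fun x _ => mul_nonneg (N.c_nonneg _ _) ?_
    rw [hf v (fun h => hv (Finset.mem_insert_of_mem h)), sub_zero]
    exact h0 x
  have h3 : ∑ v ∈ S', ∑ x ∈ T, N.c v x * (f x - f v) = ∑ v ∈ S', N.lap f v := by
    refine Finset.sum_congr rfl fun v hv => ?_
    rw [N.lap_eq (T := T)]
    intro x hx
    exact Finset.mem_union_right _ (Finset.mem_biUnion.2 ⟨v, hv, hx⟩)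
  rw [h1, h3, Finset.sum_insert hS] at h2
  linarith

lemma ulim {ι : Type*} (U : Ultrafilter ι) (f : ι → ℝ) (a b : ℝ)
    (h : ∀ᶠ i in (U : Filter ι), f i ∈ Set.Icc a b) :
    ∃ x, Tendsto f U (𝓝 x) := by
  obtain ⟨x, _, hx⟩ := (isCompact_Icc (a := a) (b := b)).ultrafilter_le_nhds' (U.map f) h
  exact ⟨x, hx⟩

structure Green (g : V → V → ℝ) : Prop where
  nonneg : ∀ z v, 0 ≤ g z v
  symm : ∀ z v, g z v = g v z
  root : ∀ z, g z N.o = 0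
  lap_ne : ∀ z, z ≠ N.o → ∀ v, v ≠ N.o → N.lap (g z) v = if v = z then -1 else 0
  lap_o : ∀ z, z ≠ N.o → N.lap (g z) N.o = 1
  psd : ∀ (F : Finset V) (a : V → ℝ), 0 ≤ ∑ x ∈ F, a x * ∑ y ∈ F, a y * g y x

lemma exists_green [Infinite V] (hrec : N.Recurrent) : ∃ g, N.Green g := by
  have hS : ∀ F : Finset V, N.o ∉ F.erase N.o := fun F => by simp
  choose G hG0 hGl using fun (F : Finset V) (z : V) =>
    N.fin_solve (hS F) (fun v => if v = z then -1 else 0)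
  have hGn : ∀ F z v, 0 ≤ G F z v := fun F z v =>
    N.fin_min (hS F) (G F z) (hG0 F z) (fun v hv => by
      rw [hGl F z v hv]; split_ifs <;> norm_num) v
  have hGo : ∀ F z, G F z N.o = 0 := fun F z => hG0 F z _ (hS F)
  have hGz : ∀ F z, z ∉ F.erase N.o → ∀ v, G F z v = 0 := fun F z hz v =>
    N.fin_zero (hS F) (G F z) (hG0 F z) (fun v hv => by
      rw [hGl F z v hv, if_neg]; rintro rfl; exact hz hv) v
  have hsum : ∀ F z (h : V → ℝ), z ∈ F.erase N.o → ∑ v ∈ F.erase N.o, h v * N.lap (G F z) v = - h z := by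
    intro F z h hz
    rw [Finset.sum_eq_single z]
    · rw [hGl F z z hz]; simp
    · intro v hv hvz
      rw [hGl F z v hv]; simp [hvz]
    · intro h; exact absurd hz h
  have hGs : ∀ F z v, G F z v = G F v z := by
    intro F z w
    by_cases hz : z ∈ F.erase N.o
    · by_cases hw : w ∈ F.erase N.o
      · have := N.fin_symm (G F z) (G F w) (hG0 F z) (hG0 F w)
        rw [hsum F z _ hz, hsum F w _ hw] at this
        linarith
      · rw [hGz F w hw, hG0 F z _ hw]
    · rw [hGz F z hz, hG0 F w _ hz]
  have hGle : ∀ F z, N.lap (G F z) N.o ≤ 1 := by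
    intro F z
    refine (N.fin_flux (hS F) _ (hG0 F z) (hGn F z)).trans ?_
    by_cases hz : z ∈ F.erase N.o
    · have := hsum F z (fun _ => 1) hz
      simp only [one_mul] at this
      rw [this]; simp
    · have : G F z = fun _ => 0 := funext (hGz F z hz)
      rw [this]; simp [N.lap_const]
  have hGb : ∀ v, ∃ (C : ℝ) (P : Finset V), ∀ z F, P ⊆ F → G F z v ∈ Set.Icc 0 C := by
    intro v
    obtain ⟨C, P, _, h⟩ := N.exists_bound v
    refine ⟨C, P, fun z F hF => ⟨hGn F z v, h _ (hGn F z) (hGo F z) (hGle F z) fun w hw hwo => ?_⟩⟩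
    rw [hGl F z w (Finset.mem_erase.2 ⟨hwo, hF hw⟩)]
    split_ifs <;> norm_num
  have hGp : ∀ F (F' : Finset V) (a : V → ℝ), 0 ≤ ∑ x ∈ F', a x * ∑ y ∈ F', a y * G F y x := by
    intro F F' a
    let f : V → ℝ := fun v => ∑ x ∈ F', a x * G F x v
    have hf : ∀ v, v ∉ F.erase N.o → f v = 0 := fun v hv =>
      Finset.sum_eq_zero fun x _ => by rw [hG0 F x v hv, mul_zero]
    have h := N.fin_neg f hf
    have e : ∑ v ∈ F.erase N.o, f v * N.lap f v = - ∑ x ∈ F', a x * f x := by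
      have e1 : ∀ v, f v * N.lap f v = ∑ x ∈ F', a x * (f v * N.lap (G F x) v) := by
        intro v
        rw [show N.lap f v = _ from N.lap_sum F' a (G F) v, Finset.mul_sum]
        exact Finset.sum_congr rfl fun x _ => by ring
      simp only [e1]
      rw [Finset.sum_comm, ← Finset.sum_neg_distrib]
      refine Finset.sum_congr rfl fun x _ => ?_
      rw [← Finset.mul_sum]
      by_cases hx : x ∈ F.erase N.o
      · rw [hsum F x f hx]; ring
      · rw [hf x hx]
        have : G F x = fun _ => 0 := funext (hGz F x hx)
        rw [this]; simp [N.lap_const]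
    rw [e] at h
    change 0 ≤ ∑ x ∈ F', a x * f x
    linarith
  let U : Ultrafilter (Finset V) := Ultrafilter.of atTop
  have hU : (U : Filter (Finset V)) ≤ atTop := Ultrafilter.of_le atTop
  have hlim : ∀ z v, ∃ x, Tendsto (fun F => G F z v) U (𝓝 x) := by
    intro z v
    obtain ⟨C, P, h⟩ := hGb v
    refine ulim U _ 0 C (hU ?_)
    filter_upwards [eventually_ge_atTop P] with F hF using h z F hF
  choose g hg using hlim
  have hn : ∀ z v, 0 ≤ g z v := fun z v => ge_of_tendsto' (hg z v) fun F => hGn F z v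
  have hs : ∀ z v, g z v = g v z := fun z v =>
    tendsto_nhds_unique (hg z v) ((hg v z).congr fun F => hGs F v z)
  have hro : ∀ z, g z N.o = 0 := fun z =>
    tendsto_nhds_unique (hg z N.o) (by simp only [hGo]; exact tendsto_const_nhds)
  have hl : ∀ z v, v ≠ N.o → N.lap (g z) v = if v = z then -1 else 0 := by
    intro z v hv
    refine tendsto_nhds_unique (N.lap_tendsto (hg z) v) ?_
    refine tendsto_const_nhds.congr' (hU ?_)
    filter_upwards [eventually_ge_atTop {v}] with F hF
    rw [hGl F z v (Finset.mem_erase.2 ⟨hv, hF (Finset.mem_singleton_self v)⟩)]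
  refine ⟨g, hn, hs, hro, fun z _ => hl z, ?_, ?_⟩
  · intro z hz
    apply le_antisymm
    · exact le_of_tendsto' (N.lap_tendsto (hg z) N.o) fun F => hGle F z
    · let e0 : V → ℝ := fun v => ∑ x ∈ N.nb N.o, N.c N.o x * g x v
      let e : V → ℝ := fun v => e0 v + if v = N.o then 1 else 0
      have he0 : 0 ≤ e := fun v => add_nonneg
        (Finset.sum_nonneg fun x _ => mul_nonneg (N.c_nonneg _ _) (hn _ _)) (by split_ifs <;> norm_num)
      have heo : 1 ≤ e N.o := by simp [e, e0, hro]
      have hel : ∀ v, v ≠ N.o → N.lap e v ≤ 0 := by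
        intro v hv
        have e1 : N.lap e0 v = - N.c N.o v := by
          rw [show N.lap e0 v = _ from N.lap_sum (N.nb N.o) (N.c N.o) g v]
          simp only [hl _ v hv]
          by_cases h : N.G.Adj N.o v
          · rw [Finset.sum_eq_single v]
            · simp
            · intro x _ hx; simp [hx.symm]
            · intro h'; exact absurd (N.mem_nb.2 h) h'
          · rw [N.c_eq_zero _ _ h]
            simp only [neg_zero]
            refine Finset.sum_eq_zero fun x hx => ?_
            rw [if_neg, mul_zero]
            rintro rfl; exact h (N.mem_nb.1 hx)
        have e2 : N.lap (fun v => if v = N.o then (1 : ℝ) else 0) v = N.c N.o v := by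
          rw [N.lap_eq (T := insert N.o (N.nb v)) (Finset.subset_insert _ _)]
          rw [Finset.sum_eq_single N.o]
          · simp [hv, N.c_symm]
          · intro x _ hx; simp [hx, hv]
          · intro h; exact absurd (Finset.mem_insert_self _ _) h
        rw [show N.lap e v = _ from N.lap_add e0 _ v, e1, e2]; simp
      have := N.super_ge_one hrec e he0 heo hel z
      simp only [e, if_neg hz, add_zero, e0] at this
      rw [N.lap_eq', hro, mul_zero, sub_zero]
      refine this.trans (le_of_eq (Finset.sum_congr rfl fun x _ => by rw [hs]))
  · intro F a
    exact ge_of_tendsto' (tendsto_finsetSum _ fun x _ => (tendsto_finsetSum _ fun y _ =>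
      (hg y x).const_mul (a y)).const_mul (a x)) fun F' => hGp F' F a

end aux2
end RootedNetwork
namespace RootedNetwork
section aux3
variable {V : Type*} (N : RootedNetwork V)

lemma green_lap {g : V → V → ℝ} (hg : N.Green g) {F : Finset V} (hF : N.o ∉ F) (a : V → ℝ)
    {v : V} (hv : v ≠ N.o) :
    N.lap (fun v => ∑ x ∈ F, a x * g x v) v = if v ∈ F then - a v else 0 := by
  rw [N.lap_sum]
  have : ∀ x ∈ F, a x * N.lap (g x) v = if v = x then - a x else 0 := by
    intro x hx
    rw [hg.lap_ne x (fun h => hF (h ▸ hx)) v hv]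
    split_ifs <;> simp
  rw [Finset.sum_congr rfl this, Finset.sum_ite_eq]

lemma green_lap_o {g : V → V → ℝ} (hg : N.Green g) {F : Finset V} (hF : N.o ∉ F) (a : V → ℝ) :
    N.lap (fun v => ∑ x ∈ F, a x * g x v) N.o = ∑ x ∈ F, a x := by
  rw [N.lap_sum]
  refine Finset.sum_congr rfl fun x hx => ?_
  rw [hg.lap_o x (fun h => hF (h ▸ hx)), mul_one]

lemma green_bdd [Infinite V] {g : V → V → ℝ} (hg : N.Green g) (z : V) : ∃ C, ∀ v, g z v ≤ C := by
  obtain ⟨C, P, hC, h⟩ := N.exists_bound z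
  refine ⟨C, fun v => ?_⟩
  by_cases hv : v = N.o
  · rw [hv, hg.root]; exact hC
  rw [hg.symm]
  refine h (g v) (hg.nonneg v) (hg.root v) (hg.lap_o v hv).le fun w _ hw => ?_
  rw [hg.lap_ne v hv w hw]
  split_ifs <;> norm_num

lemma balayage [Infinite V] (hrec : N.Recurrent) {g : V → V → ℝ} (hg : N.Green g)
    {F : Finset V} (hF : N.o ∉ F) (ψ : V → ℝ) (h0 : ∀ v, 0 ≤ ψ v) (ho : ψ N.o = 0)
    (hs : ∀ v, v ≠ N.o → N.lap ψ v ≤ 0) :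
    ∃ ρ : V → ℝ, (∀ v, 0 ≤ ρ v) ∧ (∀ v, v ∉ F → ρ v = 0) ∧
      (∀ v, ∑ x ∈ F, ρ x * g x v ≤ ψ v) ∧ ∀ v ∈ F, ∑ x ∈ F, ρ x * g x v = ψ v := by
  let P : Set (V → ℝ) := {k | (∀ v, 0 ≤ k v) ∧ (∀ v, v ≠ N.o → N.lap k v ≤ 0) ∧ ∀ v ∈ F, ψ v ≤ k v}
  have hψP : ψ ∈ P := ⟨h0, hs, fun v _ => le_rfl⟩
  let u : V → ℝ := fun v => ⨅ k : P, k.1 v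
  have : Nonempty P := ⟨⟨ψ, hψP⟩⟩
  have hbdd : ∀ v, BddBelow (Set.range fun k : P => k.1 v) := fun v =>
    ⟨0, by rintro _ ⟨k, rfl⟩; exact k.2.1 v⟩
  have hu_le : ∀ k ∈ P, ∀ v, u v ≤ k v := fun k hk v => ciInf_le (hbdd v) (⟨k, hk⟩ : P)
  have hu0 : ∀ v, 0 ≤ u v := fun v => le_ciInf fun k => k.2.1 v
  have huF : ∀ v ∈ F, u v = ψ v := fun v hv =>
    le_antisymm (hu_le ψ hψP v) (le_ciInf fun k => k.2.2.2 v hv)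
  have huo : u N.o = 0 := le_antisymm (ho ▸ hu_le ψ hψP N.o) (hu0 _)
  have hus : ∀ v, v ≠ N.o → N.lap u v ≤ 0 := by
    intro v hv
    have hc := N.cv_pos v
    rw [N.lap_eq', sub_nonpos, mul_comm, ← div_le_iff₀ hc]
    refine le_ciInf fun k => ?_
    rw [div_le_iff₀ hc, mul_comm]
    have := k.2.2.1 v hv
    rw [N.lap_eq', sub_nonpos] at this
    refine le_trans (Finset.sum_le_sum fun x _ => ?_) this
    exact mul_le_mul_of_nonneg_left (hu_le k.1 k.2 x) (N.c_nonneg _ _)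
  have huh : ∀ v, v ≠ N.o → v ∉ F → N.lap u v = 0 := by
    intro v hv hvF
    have hc := N.cv_pos v
    have h1 := hus v hv
    apply le_antisymm h1
    let m : ℝ := (∑ x ∈ N.nb v, N.c v x * u x) / N.cv v
    have hm : N.cv v * m = ∑ x ∈ N.nb v, N.c v x * u x := by
      simp only [m]; field_simp
    have hmu : m ≤ u v := by
      rw [N.lap_eq', sub_nonpos, ← hm] at h1
      exact le_of_mul_le_mul_left h1 hc
    have hm0 : 0 ≤ m := div_nonneg
      (Finset.sum_nonneg fun x _ => mul_nonneg (N.c_nonneg _ _) (hu0 _)) hc.le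
    let k : V → ℝ := Function.update u v m
    have hku : ∀ x, k x ≤ u x := by
      intro x
      by_cases hx : x = v
      · subst hx; simpa [k] using hmu
      · simp [k, hx]
    have hkP : k ∈ P := by
      refine ⟨fun x => ?_, fun x hx => ?_, fun x hx => ?_⟩
      · by_cases hx : x = v
        · subst hx; simpa [k] using hm0
        · simpa [k, hx] using hu0 x
      · by_cases hxv : x = v
        · subst hxv
          rw [N.lap_eq', sub_nonpos]
          have : k x = m := by simp [k]
          rw [this, hm]
          exact Finset.sum_le_sum fun y _ => mul_le_mul_of_nonneg_left (hku y) (N.c_nonneg _ _)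
        · have h2 := hus x hx
          rw [N.lap_eq', sub_nonpos] at h2 ⊢
          have : k x = u x := by simp [k, hxv]
          rw [this]
          refine le_trans ?_ h2
          exact Finset.sum_le_sum fun y _ => mul_le_mul_of_nonneg_left (hku y) (N.c_nonneg _ _)
      · have hxv : x ≠ v := fun h => hvF (h ▸ hx)
        have : k x = u x := by simp [k, hxv]
        rw [this, huF x hx]
    have h3 := hu_le k hkP v
    have h4 : k v = m := by simp [k]
    rw [N.lap_eq', ← hm, sub_nonneg]
    exact mul_le_mul_of_nonneg_left (h4 ▸ h3) hc.le
  -- bounded above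
  obtain ⟨M, hM⟩ : ∃ M, ∀ v, u v ≤ M := by
    refine ⟨∑ x ∈ F, ψ x, fun v => hu_le (fun _ => ∑ x ∈ F, ψ x) ⟨?_, ?_, ?_⟩ v⟩
    · intro v; exact Finset.sum_nonneg fun x _ => h0 x
    · intro v _; exact (N.lap_const _ v).le
    · intro v hv; exact Finset.single_le_sum (fun x _ => h0 x) hv
  let ρ : V → ℝ := fun v => if v ∈ F then - N.lap u v else 0
  have hρ0 : ∀ v, 0 ≤ ρ v := by
    intro v
    simp only [ρ]
    split_ifs with h
    · have := hus v (fun h' => hF (h' ▸ h)); linarith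
    · exact le_rfl
  let G : V → ℝ := fun v => ∑ x ∈ F, ρ x * g x v
  have hG0 : ∀ v, 0 ≤ G v := fun v => Finset.sum_nonneg fun x _ => mul_nonneg (hρ0 x) (hg.nonneg _ _)
  have hGo : G N.o = 0 := Finset.sum_eq_zero fun x _ => by rw [hg.root, mul_zero]
  have hGl : ∀ v, v ≠ N.o → N.lap G v = N.lap u v := by
    intro v hv
    rw [show N.lap G v = _ from N.green_lap hg hF ρ hv]
    by_cases h : v ∈ F
    · simp [ρ, h]
    · rw [if_neg h, huh v hv h]
  obtain ⟨M', hM'⟩ : ∃ M, ∀ v, G v ≤ M := by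
    choose C hC using N.green_bdd hg
    exact ⟨∑ x ∈ F, ρ x * C x, fun v => Finset.sum_le_sum fun x _ =>
      mul_le_mul_of_nonneg_left (hC x v) (hρ0 x)⟩
  have hGu : ∀ v, G v = u v := by
    intro v
    have h1 := N.min_principle hrec (fun v => G v + (-1) * u v) M
      (fun v => by have := hG0 v; have := hM v; linarith) (by rw [hGo, huo]; simp)
      (fun v hv => by rw [N.lap_add, N.lap_smul, hGl v hv]; linarith) v
    have h2 := N.min_principle hrec (fun v => u v + (-1) * G v) M'
      (fun v => by have := hu0 v; have := hM' v; linarith) (by rw [hGo, huo]; simp)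
      (fun v hv => by rw [N.lap_add, N.lap_smul, hGl v hv]; linarith) v
    linarith
  refine ⟨ρ, hρ0, fun v hv => by simp [ρ, hv], fun v => ?_, fun v hv => ?_⟩
  · exact (hGu v).le.trans (hu_le ψ hψP v)
  · exact (hGu v).trans (huF v hv)

/-! spheres -/
lemma exists_pred {w : V} {n : ℕ} (h : N.G.dist N.o w = n + 1) :
    ∃ y, N.G.Adj y w ∧ N.G.dist N.o y = n := by
  obtain ⟨p, hp⟩ := N.connected.exists_walk_length_eq_dist w N.o
  rw [SimpleGraph.dist_comm, h] at hp
  generalize ho : N.o = o' at p hp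
  cases p with
  | nil => simp at hp
  | @cons _ y _ hwy q =>
    subst ho
    simp only [SimpleGraph.Walk.length_cons, add_left_inj] at hp
    refine ⟨y, hwy.symm, ?_⟩
    have h1 := SimpleGraph.dist_le q
    rw [SimpleGraph.dist_comm] at h1
    have h2 := N.connected.dist_triangle (u := N.o) (v := y) (w := w)
    rw [SimpleGraph.dist_eq_one_iff_adj.2 hwy.symm] at h2
    omega

lemma dist_adj {v x : V} (h : N.G.Adj v x) : N.G.dist N.o x ≤ N.G.dist N.o v + 1 := by
  have h2 := N.connected.dist_triangle (u := N.o) (v := v) (w := x)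
  rwa [SimpleGraph.dist_eq_one_iff_adj.2 h] at h2

lemma ball_finite (n : ℕ) : {w | N.G.dist N.o w ≤ n}.Finite := by
  induction n with
  | zero =>
    refine (Set.finite_singleton N.o).subset fun w hw => ?_
    simp only [Set.mem_ofPred_eq, Nat.le_zero] at hw
    exact ((N.connected.dist_eq_zero_iff).1 hw).symm
  | succ n ih =>
    refine (ih.union (ih.biUnion fun y _ => (N.nb y).finite_toSet)).subset fun w hw => ?_
    simp only [Set.mem_ofPred_eq] at hw
    rcases Nat.lt_or_ge (N.G.dist N.o w) (n + 1) with h | h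
    · left; exact Nat.lt_succ_iff.1 h
    · right
      obtain ⟨y, hy, hd⟩ := N.exists_pred (le_antisymm hw h)
      exact Set.mem_biUnion (show y ∈ {w | N.G.dist N.o w ≤ n} from hd.le) (N.mem_nb.2 hy)

def bal (n : ℕ) : Finset V := (N.ball_finite n).toFinset
def sph (n : ℕ) : Finset V := (N.bal n).filter fun w => N.G.dist N.o w = n

lemma mem_bal {n : ℕ} {w : V} : w ∈ N.bal n ↔ N.G.dist N.o w ≤ n := by simp [bal]
lemma mem_sph {n : ℕ} {w : V} : w ∈ N.sph n ↔ N.G.dist N.o w = n := by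
  simp only [sph, Finset.mem_filter, mem_bal]
  exact ⟨fun h => h.2, fun h => ⟨h.le, h⟩⟩

lemma sph_nonempty [Infinite V] (r : ℕ) : (N.sph r).Nonempty := by
  obtain ⟨w, hw⟩ := Infinite.exists_notMem_finset (N.bal r)
  rw [mem_bal, not_le] at hw
  have : ∀ k, ∀ w, N.G.dist N.o w = r + k → (N.sph r).Nonempty := by
    intro k
    induction k with
    | zero => intro w hw; exact ⟨w, N.mem_sph.2 hw⟩
    | succ k ih =>
      intro w hw
      obtain ⟨y, _, hy⟩ := N.exists_pred (n := r + k) hw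
      exact ih y hy
  exact this (N.G.dist N.o w - r) w (by omega)

lemma o_notMem_sph {r : ℕ} (hr : 1 ≤ r) : N.o ∉ N.sph r := by
  rw [mem_sph, SimpleGraph.dist_self]; omega

lemma separation (S : Finset V) (hS : S.Nonempty) (K : ℝ)
    (h : ∀ ψ, N.IsPotential ψ → ∃ v ∈ S, ψ v ≤ K) :
    ∃ ν : V → ℝ, (∀ v, 0 ≤ ν v) ∧ ∑ v ∈ S, ν v = 1 ∧
      ∀ ψ, N.IsPotential ψ → ∑ v ∈ S, ν v * ψ v ≤ K := by
  by_cases hex : ∃ ψ, N.IsPotential ψ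
  swap
  · obtain ⟨w, hw⟩ := hS
    refine ⟨fun v => if v = w then 1 else 0, fun v => by dsimp only; split_ifs <;> norm_num, ?_,
      fun ψ hψ => absurd ⟨ψ, hψ⟩ hex⟩
    rw [Finset.sum_ite_eq', if_pos hw]
  obtain ⟨ψ₁, hψ₁⟩ := hex
  let A : Set (S → ℝ) := Set.pi Set.univ fun _ => Set.Ioi K
  let B : Set (S → ℝ) := (fun ψ : V → ℝ => fun v : S => ψ v.1) '' {ψ | N.IsPotential ψ}
  have hA : Convex ℝ A := convex_pi fun _ _ => convex_Ioi K
  have hAo : IsOpen A := isOpen_set_pi Set.finite_univ fun _ _ => isOpen_Ioi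
  have hB : Convex ℝ B := by
    rintro _ ⟨ψ, hψ, rfl⟩ _ ⟨φ, hφ, rfl⟩ a b ha hb hab
    refine ⟨fun v => a * ψ v + b * φ v, ⟨fun v => ?_, ?_, ?_, fun v hv => ?_⟩, ?_⟩
    · exact add_nonneg (mul_nonneg ha (hψ.1 v)) (mul_nonneg hb (hφ.1 v))
    · simp only [hψ.2.1, hφ.2.1]; simp
    · rw [N.lap_add, N.lap_smul, N.lap_smul, hψ.2.2.1, hφ.2.2.1]; linarith
    · rw [N.lap_add, N.lap_smul, N.lap_smul, hψ.2.2.2 v hv, hφ.2.2.2 v hv]; simp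
    · funext v; simp
  have hdisj : Disjoint A B := by
    rw [Set.disjoint_left]
    rintro _ hA ⟨ψ, hψ, rfl⟩
    obtain ⟨v, hv, hle⟩ := h ψ hψ
    have := hA ⟨v, hv⟩ (Set.mem_univ _)
    simp only [Set.mem_Ioi] at this
    linarith
  obtain ⟨f, u, hfA, hfB⟩ := geometric_hahn_banach_open hA hAo hB hdisj
  let e : S → (S → ℝ) := fun v => Pi.single v 1
  have hf : ∀ x : S → ℝ, f x = ∑ v, x v * f (e v) := by
    intro x
    have : x = ∑ v, x v • e v := by
      funext w
      simp [e, Finset.sum_apply, Pi.single_apply]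
    conv_lhs => rw [this]
    simp
  have hneg : ∀ v, f (e v) ≤ 0 := by
    intro v
    by_contra hv
    push Not at hv
    let a : S → ℝ := fun _ => K + 1
    obtain ⟨t, ht0, ht⟩ : ∃ t : ℝ, 0 ≤ t ∧ u ≤ f a + t * f (e v) := by
      refine ⟨|u - f a| / f (e v), by positivity, ?_⟩
      rw [div_mul_cancel₀ _ hv.ne']
      linarith [le_abs_self (u - f a)]
    have : a + t • e v ∈ A := by
      intro w _
      simp only [Set.mem_Ioi, Pi.add_apply, Pi.smul_apply, smul_eq_mul, a, e, Pi.single_apply]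
      split_ifs <;> linarith
    have h2 := hfA _ this
    rw [map_add, map_smul, smul_eq_mul] at h2
    linarith
  let s : ℝ := ∑ v, f (e v)
  have hKu : K * s ≤ u := by
    have hε : ∀ ε > 0, (K + ε) * s < u := by
      intro ε hε
      have := hfA (fun _ => K + ε) (fun w _ => by simp only [Set.mem_Ioi]; linarith)
      rwa [hf, ← Finset.mul_sum] at this
    have ht : Tendsto (fun ε : ℝ => (K + ε) * s) (𝓝[>] 0) (𝓝 ((K + 0) * s)) := by
      apply Tendsto.mono_left _ nhdsWithin_le_nhds
      exact (Continuous.tendsto (by fun_prop) 0)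
    have := le_of_tendsto ht (eventually_nhdsWithin_of_forall fun ε he => (hε ε he).le)
    simpa using this
  have hs : s < 0 := by
    refine lt_of_le_of_ne (Finset.sum_nonpos fun v _ => hneg v) fun h0 => ?_
    have hz : ∀ v, f (e v) = 0 := fun v =>
      (Finset.sum_eq_zero_iff_of_nonpos fun v _ => hneg v).1 h0 v (Finset.mem_univ v)
    have h1 := hfA (fun _ => K + 1) (fun w _ => by simp)
    have h2 := hfB _ ⟨ψ₁, hψ₁, rfl⟩
    rw [hf] at h1 h2
    simp only [hz, mul_zero, Finset.sum_const_zero] at h1 h2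
    linarith
  refine ⟨fun v => if hv : v ∈ S then f (e ⟨v, hv⟩) / s else 0, fun v => ?_, ?_, fun ψ hψ => ?_⟩
  · dsimp only
    split_ifs with hv
    · exact div_nonneg_of_nonpos (hneg _) hs.le
    · exact le_rfl
  · rw [← Finset.sum_coe_sort]
    simp only [Finset.coe_mem, dite_true, Subtype.coe_eta]
    rw [← Finset.sum_div, div_self hs.ne]
  · rw [← Finset.sum_coe_sort]
    simp only [Finset.coe_mem, dite_true, Subtype.coe_eta]
    have h2 := hfB _ ⟨ψ, hψ, rfl⟩
    rw [hf] at h2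
    have : ∑ v : S, f (e v) / s * ψ v = (∑ v : S, ψ v * f (e v)) / s := by
      rw [Finset.sum_div]; exact Finset.sum_congr rfl fun v _ => by ring
    rw [this, div_le_iff_of_neg hs]
    linarith

end aux3
end RootedNetwork
namespace RootedNetwork
section aux4
variable {V : Type*} (N : RootedNetwork V)

lemma bilin_symm {g : V → V → ℝ} (hg : N.Green g) (F F' : Finset V) (a b : V → ℝ) :
    ∑ x ∈ F, a x * ∑ y ∈ F', b y * g y x = ∑ y ∈ F', b y * ∑ x ∈ F, a x * g x y := by
  simp only [Finset.mul_sum]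
  rw [Finset.sum_comm]
  exact Finset.sum_congr rfl fun y _ => Finset.sum_congr rfl fun x _ => by rw [hg.symm]; ring

/-- capacities tend to zero -/
lemma equilibrium [Infinite V] (hrec : N.Recurrent) {g : V → V → ℝ} (hg : N.Green g)
    (ε : ℝ) (hε : 0 < ε) : ∃ s, 1 ≤ s ∧ ∃ σ : V → ℝ, (∀ v, v ∉ N.sph s → σ v = 0) ∧
      (∀ v ∈ N.sph s, ∑ x ∈ N.sph s, σ x * g x v = 1) ∧ ∑ x ∈ N.sph s, σ x < ε := by
  let φ : V → ℝ := fun v => if v = N.o then 0 else 1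
  have hφl : ∀ v, v ≠ N.o → N.lap φ v ≤ 0 := by
    intro v hv
    rw [N.lap_eq (Finset.Subset.refl _)]
    refine Finset.sum_nonpos fun x _ => mul_nonpos_of_nonneg_of_nonpos (N.c_nonneg _ _) ?_
    simp only [φ, if_neg hv]; split_ifs <;> norm_num
  have hφ0 : ∀ v, 0 ≤ φ v := fun v => by simp only [φ]; split_ifs <;> norm_num
  have hφ1 : ∀ v, φ v ≤ 1 := fun v => by simp only [φ]; split_ifs <;> norm_num
  choose σ hσ0 hσs hσle hσeq using fun n : ℕ =>
    N.balayage hrec hg (N.o_notMem_sph (Nat.le_add_left 1 n)) φ hφ0 (by simp [φ]) hφl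
  let u : ℕ → V → ℝ := fun n v => ∑ x ∈ N.sph (n + 1), σ n x * g x v
  have hu0 : ∀ n v, 0 ≤ u n v := fun n v =>
    Finset.sum_nonneg fun x _ => mul_nonneg (hσ0 n x) (hg.nonneg _ _)
  have hu1 : ∀ n v, u n v ≤ 1 := fun n v => (hσle n v).trans (hφ1 v)
  let U : Ultrafilter ℕ := Ultrafilter.of atTop
  have hU : (U : Filter ℕ) ≤ atTop := Ultrafilter.of_le atTop
  choose w hw using fun v => ulim U (fun n => u n v) 0 1
    (Eventually.of_forall fun n => ⟨hu0 n v, hu1 n v⟩)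
  have hw0 : ∀ v, 0 ≤ w v := fun v => ge_of_tendsto' (hw v) fun n => hu0 n v
  have hw1 : ∀ v, w v ≤ 1 := fun v => le_of_tendsto' (hw v) fun n => hu1 n v
  have hwo : w N.o = 0 := tendsto_nhds_unique (hw N.o) (by
    simp only [u, hg.root, mul_zero, Finset.sum_const_zero]; exact tendsto_const_nhds)
  have hwl : ∀ v, v ≠ N.o → N.lap w v = 0 := by
    intro v hv
    refine tendsto_nhds_unique (N.lap_tendsto hw v) ?_
    refine tendsto_const_nhds.congr' (hU ?_)
    filter_upwards [eventually_ge_atTop (N.G.dist N.o v)] with n hn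
    rw [show N.lap (u n) v = _ from N.green_lap hg (N.o_notMem_sph (Nat.le_add_left 1 n)) (σ n) hv,
      if_neg]
    rw [N.mem_sph]; omega
  have hwz : ∀ v, w v = 0 := by
    intro v
    apply le_antisymm _ (hw0 v)
    have := N.min_principle hrec (fun v => (-1) * w v) 1 (fun v => by have := hw1 v; linarith)
      (by rw [hwo]; simp) (fun v hv => by rw [N.lap_smul, hwl v hv]; simp) v
    linarith
  have hlo := N.lap_tendsto hw N.o
  rw [funext hwz, N.lap_const] at hlo
  obtain ⟨n, hn⟩ := ((tendsto_order.1 hlo).2 ε hε).exists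
  rw [show N.lap (u n) N.o = _ from
    N.green_lap_o hg (N.o_notMem_sph (Nat.le_add_left 1 n)) (σ n)] at hn
  refine ⟨n + 1, Nat.le_add_left 1 n, σ n, hσs n, fun v hv => ?_, hn⟩
  rw [hσeq n v hv]
  simp only [φ]
  rw [if_neg]
  rintro rfl
  exact N.o_notMem_sph (Nat.le_add_left 1 n) hv

lemma main_aux [Infinite V] (hrec : N.Recurrent) (K : ℝ) (hK : 0 ≤ K) :
    ∀ᶠ r in atTop, ∃ ψ, N.IsPotential ψ ∧ ∀ v ∈ N.sph r, K < ψ v := by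
  by_contra hcon
  rw [not_eventually] at hcon
  obtain ⟨g, hg⟩ := N.exists_green hrec
  let bad : Set ℕ := {r | ¬ ∃ ψ, N.IsPotential ψ ∧ ∀ v ∈ N.sph r, K < ψ v}
  have hsep : ∀ r, ∃ ν : V → ℝ, r ∈ bad → (∀ v, 0 ≤ ν v) ∧ ∑ v ∈ N.sph r, ν v = 1 ∧
      ∀ ψ, N.IsPotential ψ → ∑ v ∈ N.sph r, ν v * ψ v ≤ K := by
    intro r
    by_cases hr : r ∈ bad
    · obtain ⟨ν, hν⟩ := N.separation (N.sph r) (N.sph_nonempty r) K (by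
        intro ψ hψ
        by_contra hne
        push Not at hne
        exact hr ⟨ψ, hψ, hne⟩)
      exact ⟨ν, fun _ => hν⟩
    · exact ⟨0, fun h => absurd h hr⟩
  choose ν hν using hsep
  have hne : (atTop ⊓ 𝓟 bad : Filter ℕ).NeBot := frequently_mem_iff_neBot.1 hcon
  let U : Ultrafilter ℕ := Ultrafilter.of (atTop ⊓ 𝓟 bad)
  have hU : (U : Filter ℕ) ≤ atTop ⊓ 𝓟 bad := Ultrafilter.of_le _
  have hU1 : (U : Filter ℕ) ≤ atTop := hU.trans inf_le_left
  have hUb : ∀ᶠ r in (U : Filter ℕ), r ∈ bad :=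
    (hU.trans inf_le_right) (mem_principal_self bad)
  have hU2 : ∀ n : ℕ, ∀ᶠ r in (U : Filter ℕ), r ∈ bad ∧ n < r := fun n =>
    hUb.and (hU1 (eventually_gt_atTop n))
  let f : ℕ → V → ℝ := fun r v => ∑ z ∈ N.sph r, ν r z * g z v
  have hf0 : ∀ r ∈ bad, ∀ v, 0 ≤ f r v := fun r hr v =>
    Finset.sum_nonneg fun z _ => mul_nonneg ((hν r hr).1 z) (hg.nonneg _ _)
  have hfo : ∀ r, f r N.o = 0 := fun r => by simp [f, hg.root]
  have hflo : ∀ r ∈ bad, 1 ≤ r → N.lap (f r) N.o = 1 := fun r hr h1 => by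
    rw [show N.lap (f r) N.o = _ from N.green_lap_o hg (N.o_notMem_sph h1) (ν r), (hν r hr).2.1]
  have hfl : ∀ r, 1 ≤ r → ∀ v, v ≠ N.o → N.lap (f r) v = if v ∈ N.sph r then - ν r v else 0 :=
    fun r h1 v hv => N.green_lap hg (N.o_notMem_sph h1) (ν r) hv
  have hlim : ∀ v, ∃ x, Tendsto (fun r => f r v) U (𝓝 x) := by
    intro v
    obtain ⟨C, P, _, h⟩ := N.exists_bound v
    refine ulim U _ 0 C ?_
    filter_upwards [hU2 0] with r ⟨hr, h1⟩
    refine ⟨hf0 r hr v, h _ (hf0 r hr) (hfo r) (hflo r hr h1).le fun w _ hw => ?_⟩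
    rw [hfl r h1 w hw]
    split_ifs
    · linarith [(hν r hr).1 w]
    · exact le_rfl
  choose ψ hψ using hlim
  have hpot : N.IsPotential ψ := by
    refine ⟨fun v => ?_, ?_, ?_, fun v hv => ?_⟩
    · refine ge_of_tendsto (hψ v) ?_
      filter_upwards [hUb] with r hr using hf0 r hr v
    · exact tendsto_nhds_unique (hψ N.o) (by simp only [hfo]; exact tendsto_const_nhds)
    · refine tendsto_nhds_unique (N.lap_tendsto hψ N.o) (tendsto_const_nhds.congr' ?_)
      filter_upwards [hU2 0] with r ⟨hr, h1⟩ using (hflo r hr h1).symm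
    · refine tendsto_nhds_unique (N.lap_tendsto hψ v) (tendsto_const_nhds.congr' ?_)
      filter_upwards [hU2 (N.G.dist N.o v)] with r ⟨hr, h1⟩
      rw [hfl r (by omega) v hv, if_neg]
      rw [N.mem_sph]; omega
  obtain ⟨s, hs1, σ, hσs, hσeq, hσlt⟩ := N.equilibrium hrec hg (1 / (K + 1) ^ 2) (by positivity)
  let F := (N.bal s).erase N.o
  have hFo : N.o ∉ F := by simp [F]
  have hFs : N.sph s ⊆ F := by
    intro x hx
    refine Finset.mem_erase.2 ⟨?_, N.mem_bal.2 (N.mem_sph.1 hx).le⟩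
    rintro rfl; exact N.o_notMem_sph hs1 hx
  obtain ⟨ρ, hρ0, hρs, hρle, hρeq⟩ := N.balayage hrec hg hFo ψ hpot.1 hpot.2.1
    (fun v hv => (hpot.2.2.2 v hv).le)
  let Gρ : V → ℝ := fun v => ∑ x ∈ F, ρ x * g x v
  let Gσ : V → ℝ := fun v => ∑ x ∈ F, σ x * g x v
  have hGb : ∀ v ∈ N.bal s, Gρ v = ψ v := by
    intro v hv
    by_cases h : v = N.o
    · rw [h, hpot.2.1]; simp [Gρ, hg.root]
    · exact hρeq v (Finset.mem_erase.2 ⟨h, hv⟩)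
  have hlapeq : ∀ v, N.G.dist N.o v < s → N.lap Gρ v = N.lap ψ v := by
    intro v hv
    rw [N.lap_eq', N.lap_eq', hGb v (N.mem_bal.2 hv.le)]
    congr 1
    refine Finset.sum_congr rfl fun x hx => ?_
    rw [hGb x (N.mem_bal.2 ((N.dist_adj (N.mem_nb.1 hx)).trans hv))]
  have hρ1 : ∑ x ∈ F, ρ x = 1 := by
    rw [← N.green_lap_o hg hFo ρ]
    rw [show N.lap (fun v => ∑ x ∈ F, ρ x * g x v) N.o = _ from
      hlapeq N.o (by rw [SimpleGraph.dist_self]; omega), hpot.2.2.1]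
  have hρsph : ∀ v ∈ F, v ∉ N.sph s → ρ v = 0 := by
    intro v hv hvs
    have hvo : v ≠ N.o := (Finset.mem_erase.1 hv).1
    have h1 := N.mem_bal.1 (Finset.mem_erase.1 hv).2
    rw [N.mem_sph] at hvs
    have h2 := hlapeq v (lt_of_le_of_ne h1 hvs)
    rw [show N.lap Gρ v = _ from N.green_lap hg hFo ρ hvo, if_pos hv, hpot.2.2.2 v hvo] at h2
    linarith
  have hE : ∑ x ∈ F, ρ x * Gρ x ≤ K := by
    have h1 : ∑ x ∈ F, ρ x * Gρ x = ∑ x ∈ F, ρ x * ψ x :=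
      Finset.sum_congr rfl fun x hx => by rw [hGb x (Finset.mem_erase.1 hx).2]
    rw [h1]
    refine le_of_tendsto (tendsto_finsetSum F fun x _ => (hψ x).const_mul (ρ x)) ?_
    filter_upwards [hUb] with r hr
    refine le_trans ?_ ((hν r hr).2.2 ψ hpot)
    rw [N.bilin_symm hg F (N.sph r) ρ (ν r)]
    exact Finset.sum_le_sum fun z _ => mul_le_mul_of_nonneg_left (hρle z) ((hν r hr).1 z)
  have hGσ : ∀ v ∈ N.sph s, Gσ v = 1 := by
    intro v hv
    rw [← hσeq v hv]
    exact (Finset.sum_subset hFs fun x _ hx => by rw [hσs x hx, zero_mul]).symm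
  have hρσ : ∑ x ∈ F, ρ x * Gσ x = 1 := by
    rw [← hρ1]
    refine Finset.sum_congr rfl fun x hx => ?_
    by_cases h : x ∈ N.sph s
    · rw [hGσ x h, mul_one]
    · rw [hρsph x hx h, zero_mul]
  have hσρ : ∑ x ∈ F, σ x * Gρ x = 1 := by
    rw [← hρσ]
    exact N.bilin_symm hg F F σ ρ
  have hσσ : ∑ x ∈ F, σ x * Gσ x < 1 / (K + 1) ^ 2 := by
    refine lt_of_eq_of_lt ?_ hσlt
    rw [Finset.sum_subset hFs fun x _ hx => hσs x hx]
    refine Finset.sum_congr rfl fun x hx => ?_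
    by_cases h : x ∈ N.sph s
    · rw [hGσ x h, mul_one]
    · rw [hσs x h, zero_mul]
  have hp := hg.psd F (fun x => ρ x - (K + 1) * σ x)
  have hexp : ∑ x ∈ F, (ρ x - (K + 1) * σ x) * ∑ y ∈ F, (ρ y - (K + 1) * σ y) * g y x =
      ∑ x ∈ F, ρ x * Gρ x - (K + 1) * ∑ x ∈ F, ρ x * Gσ x - (K + 1) * ∑ x ∈ F, σ x * Gρ x +
      (K + 1) ^ 2 * ∑ x ∈ F, σ x * Gσ x := by
    simp only [Finset.mul_sum (a := K + 1) (s := F) (f := fun x => ρ x * Gσ x),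
      Finset.mul_sum (s := F) (f := fun x => σ x * Gρ x),
      Finset.mul_sum (s := F) (f := fun x => σ x * Gσ x),
      ← Finset.sum_sub_distrib, ← Finset.sum_add_distrib]
    refine Finset.sum_congr rfl fun x _ => ?_
    have : ∑ y ∈ F, (ρ y - (K + 1) * σ y) * g y x = Gρ x - (K + 1) * Gσ x := by
      simp only [Gρ, Gσ, Finset.mul_sum, ← Finset.sum_sub_distrib]
      exact Finset.sum_congr rfl fun y _ => by ring
    rw [this]; ring
  rw [hexp, hρσ, hσρ] at hp
  have hpos : 0 < (K + 1) ^ 2 := by positivity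
  rw [lt_div_iff₀ hpos] at hσσ
  linarith

end aux4
end RootedNetwork

/-- On an infinite recurrent rooted network,
`M(r) = max_{ψ ∈ Ψ} min_{v ∈ ∂B(o,r)} ψ(v)` tends to infinity as `r → ∞`,
where `Ψ` is the set of potentials and `∂B(o,r) = {w : d(o,w) = r}`. -/
theorem sup_inf_potential_tendsto_atTop {V : Type*} [Infinite V]
    (N : RootedNetwork V) (hrec : N.Recurrent) :
    Tendsto (fun r : ℕ =>
        ⨆ ψ : {f : V → ℝ // N.IsPotential f},
          ⨅ v : {w : V // N.G.dist N.o w = r}, ψ.1 v.1)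
      atTop atTop := by
  rw [tendsto_atTop]
  intro b
  filter_upwards [N.main_aux hrec (max b 0) (le_max_right _ _)] with r hr
  obtain ⟨ψ, hψ, hlt⟩ := hr
  obtain ⟨w, hw⟩ := N.sph_nonempty r
  have : Nonempty {w : V // N.G.dist N.o w = r} := ⟨⟨w, N.mem_sph.1 hw⟩⟩
  have hbdd : BddAbove (Set.range fun ψ : {f : V → ℝ // N.IsPotential f} =>
      ⨅ v : {w : V // N.G.dist N.o w = r}, ψ.1 v.1) := by
    obtain ⟨C, P, _, h⟩ := N.exists_bound w
    refine ⟨C, ?_⟩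
    rintro _ ⟨φ, rfl⟩
    refine (ciInf_le ⟨0, ?_⟩ (⟨w, N.mem_sph.1 hw⟩ : {w : V // N.G.dist N.o w = r})).trans ?_
    · rintro _ ⟨v, rfl⟩
      exact φ.2.1 v.1
    · exact h φ.1 φ.2.1 φ.2.2.1 φ.2.2.2.1.le fun v _ hv => (φ.2.2.2.2 v hv).le
  refine le_trans ?_ (le_ciSup hbdd ⟨ψ, hψ⟩)
  exact le_ciInf fun v => (le_max_left b 0).trans (hlt v.1 (N.mem_sph.2 v.2)).le
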